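/- (Concentration–compactness, convergence part.) Let N ≥ 3, α ∈ (0, N), p ≥ (N+α)/(N−2), and let {u_n} be uniformly bounded in D^{1,2}(G). Then there exist a subsequence (still denoted {u_n}) and u ∈ D^{1,2}(G) such that: (i) u_n → u pointwise on G; (ii) for every h : G → ℝ vanishing at infinity (h ∈ c₀(G)), ∑_{x∈G} h(x)|∇u_n(x)|₂² → ∑_{x∈G} h(x)|∇u(x)|₂²; (iii) for every h ∈ c₀(G), ∑_{x∈G} h(x)|∇(u_n−u)(x)|₂² → 0; and (iv) for every h ∈ c₀(G), ∑_{x∈G} h(x)·(R_α ∗ |u_n−u|^p)(x)|u_n(x)−u(x)|^p → 0. -/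

import Mathlib

open Filter Topology

noncomputable section

namespace Choquard

variable {G : Type*}

/-- The word metric on the Cayley graph of `(G, S)`: the least `k` such that
`y = x * s₁ * ⋯ * s_k` with each `sᵢ ∈ S`. -/
def wordDist [Group G] (S : Finset G) (x y : G) : ℕ :=
  sInf {k : ℕ | ∃ l : List G, (∀ s ∈ l, s ∈ S) ∧ l.length = k ∧ y = x * l.prod}

/-- Convolution against a kernel: `(R ∗ f)(x) = ∑_{y ∈ G} R(x,y) f(y)`. -/
def conv (R : G → G → ℝ) (f : G → ℝ) (x : G) : ℝ := ∑' y, R x y * f y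

/-- The `ℓ^q(G)` norm of `u`. -/
def lpNorm (q : ℝ) (u : G → ℝ) : ℝ := (∑' x, |u x| ^ q) ^ (1 / q)

/-- `u ∈ ℓ^q(G)`. -/
def Memlp (q : ℝ) (u : G → ℝ) : Prop := Summable fun x : G => |u x| ^ q

/-- `|∇u(x)|_p^p = ∑_{y ∼ x} |u(y) − u(x)|^p`, where `y ∼ x` iff `y = x * s`, `s ∈ S`. -/
def gradP [Group G] (S : Finset G) (p : ℝ) (u : G → ℝ) (x : G) : ℝ :=
  ∑ s ∈ S, |u (x * s) - u x| ^ p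

/-- The `D^{1,p}` norm `(∑_x ∑_{y ∼ x} |u(y) − u(x)|^p)^{1/p}`. -/
def D1Norm [Group G] (S : Finset G) (p : ℝ) (u : G → ℝ) : ℝ :=
  (∑' x, gradP S p u x) ^ (1 / p)

/-- `u ∈ D^{1,p}(G) = {u ∈ ℓ^{Np/(N−p)}(G) : ‖u‖_{D^{1,p}} < ∞}`. -/
def MemD1p [Group G] (S : Finset G) (N : ℕ) (p : ℝ) (u : G → ℝ) : Prop :=
  Memlp ((N : ℝ) * p / ((N : ℝ) - p)) u ∧ Summable (gradP S p u)

/-- `|∇u(x)|₂² = ∑_{y ∼ x} (u(y) − u(x))²`. -/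
def gradSq [Group G] (S : Finset G) (u : G → ℝ) (x : G) : ℝ :=
  ∑ s ∈ S, (u (x * s) - u x) ^ 2

/-- The `D^{1,2}` norm. -/
def D12Norm [Group G] (S : Finset G) (u : G → ℝ) : ℝ :=
  (∑' x, gradSq S u x) ^ ((1 : ℝ) / 2)

/-- `u ∈ D^{1,2}(G) = {u ∈ ℓ^{2N/(N−2)}(G) : ‖u‖_{D^{1,2}} < ∞}`. -/
def MemD12 [Group G] (S : Finset G) (N : ℕ) (u : G → ℝ) : Prop :=
  Memlp (2 * (N : ℝ) / ((N : ℝ) - 2)) u ∧ Summable (gradSq S u)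

/-- The graph Laplacian `Δu(x) = ∑_{y ∼ x} (u(y) − u(x))`. -/
def lap [Group G] (S : Finset G) (u : G → ℝ) (x : G) : ℝ :=
  ∑ s ∈ S, (u (x * s) - u x)

/-- `u ∈ D^{2,2}(G) = {u ∈ ℓ^{2N/(N−4)}(G) : ‖Δu‖_{ℓ²} < ∞}`. -/
def MemD22 [Group G] (S : Finset G) (N : ℕ) (u : G → ℝ) : Prop :=
  Memlp (2 * (N : ℝ) / ((N : ℝ) - 4)) u ∧ Summable fun x => (lap S u x) ^ 2

/-- `u ∈ D^{2,p}(G) = {u ∈ ℓ^{Np/(N−2p)}(G) : ‖Δu‖_{ℓ^p} < ∞}`. -/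
def MemD2p [Group G] (S : Finset G) (N : ℕ) (p : ℝ) (u : G → ℝ) : Prop :=
  Memlp ((N : ℝ) * p / ((N : ℝ) - 2 * p)) u ∧ Summable fun x => |lap S u x| ^ p

/-- The nonlocal energy `∑_{x ∈ G} (R_α ∗ |u|^p)(x) |u(x)|^p`. -/
def energy (R : G → G → ℝ) (p : ℝ) (u : G → ℝ) : ℝ :=
  ∑' x, conv R (fun y => |u y| ^ p) x * |u x| ^ p

/-- The optimal constant `K` of the Sobolev-type inequality. -/
def bestK [Group G] (S : Finset G) (N : ℕ) (R : G → G → ℝ) (p : ℝ) : ℝ :=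
  sSup {t : ℝ | ∃ u : G → ℝ, MemD12 S N u ∧ D12Norm S u = 1 ∧ t = energy R p u}

/-- The discrete `p`-Laplacian. -/
def pLap [Group G] (S : Finset G) (p : ℝ) (u : G → ℝ) (x : G) : ℝ :=
  ∑ s ∈ S, |u (x * s) - u x| ^ (p - 2) * (u (x * s) - u x)

/-- The cutoff `Ψ_r`, the indicator of `{x : d(x,e) ≥ r + 1}`. -/
def cutoff [Group G] (S : Finset G) (r : ℕ) (x : G) : ℝ :=
  if r + 1 ≤ wordDist S 1 x then 1 else 0

/-- every element is a word in `S` -/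
lemma exists_word [Group G] (S : Finset G) (hS_gen : Subgroup.closure (S : Set G) = ⊤)
    (hS_sym : ∀ s ∈ S, s⁻¹ ∈ S) (g : G) : ∃ l : List G, (∀ s ∈ l, s ∈ S) ∧ g = l.prod := by
  have hg : g ∈ (Subgroup.closure (S : Set G)).toSubmonoid := by rw [hS_gen]; trivial
  rw [Subgroup.closure_toSubmonoid] at hg
  obtain ⟨l, hl, h⟩ := Submonoid.exists_list_of_mem_closure hg
  refine ⟨l, fun s hs => ?_, h.symm⟩
  rcases hl s hs with h | h
  · exact h
  · have := hS_sym _ h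
    simpa using this

lemma wordDist_word [Group G] (S : Finset G) (hS_gen : Subgroup.closure (S : Set G) = ⊤)
    (hS_sym : ∀ s ∈ S, s⁻¹ ∈ S) (g : G) :
    ∃ l : List G, (∀ s ∈ l, s ∈ S) ∧ l.length = wordDist S 1 g ∧ g = l.prod := by
  have hne : {k : ℕ | ∃ l : List G, (∀ s ∈ l, s ∈ S) ∧ l.length = k ∧ g = 1 * l.prod}.Nonempty := by
    obtain ⟨l, h1, h2⟩ := exists_word S hS_gen hS_sym g
    exact ⟨l.length, l, h1, rfl, by simpa using h2⟩
  obtain ⟨l, h1, h2, h3⟩ := Nat.sInf_mem hne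
  exact ⟨l, h1, h2, by simpa using h3⟩

lemma wordDist_left [Group G] (S : Finset G) (x y : G) :
    wordDist S x y = wordDist S 1 (x⁻¹ * y) := by
  unfold wordDist
  congr 1
  ext k
  simp [inv_mul_eq_iff_eq_mul]

lemma wordDist_comm [Group G] (S : Finset G)
    (hS_sym : ∀ s ∈ S, s⁻¹ ∈ S) (x y : G) : wordDist S x y = wordDist S y x := by
  have key : ∀ x y : G, ∀ k : ℕ, (∃ l : List G, (∀ s ∈ l, s ∈ S) ∧ l.length = k ∧ y = x * l.prod) →
      (∃ l : List G, (∀ s ∈ l, s ∈ S) ∧ l.length = k ∧ x = y * l.prod) := by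
    rintro x y k ⟨l, h1, h2, h3⟩
    refine ⟨(l.map (·⁻¹)).reverse, ?_, by simpa using h2, ?_⟩
    · intro s hs
      simp only [List.mem_reverse, List.mem_map] at hs
      obtain ⟨a, ha, rfl⟩ := hs
      exact hS_sym a (h1 a ha)
    · rw [← List.prod_inv_reverse, h3]; simp
  unfold wordDist
  congr 1
  ext k
  exact ⟨key x y k, key y x k⟩

lemma gradSq_nonneg [Group G] (S : Finset G) (w : G → ℝ) (x : G) : 0 ≤ gradSq S w x :=
  Finset.sum_nonneg fun _ _ => sq_nonneg _

/-- pseudo-Poincare inequality -/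
lemma pseudo_poincare [Group G] (S : Finset G) (w : G → ℝ) (hw : Summable (gradSq S w))
    (l : List G) : (∀ s ∈ l, s ∈ S) →
    Summable (fun x => (w (x * l.prod) - w x) ^ 2) ∧
    ∑' x, (w (x * l.prod) - w x) ^ 2 ≤ (l.length : ℝ) ^ 2 * ∑' x, gradSq S w x := by
  induction l with
  | nil => intro _; simp [summable_zero]
  | cons s l ih =>
    intro h
    obtain ⟨ih1, ih2⟩ := ih (fun t ht => h t (List.mem_cons_of_mem _ ht))
    have hs : s ∈ S := h s List.mem_cons_self
    have hle : ∀ x, (w (x * s) - w x) ^ 2 ≤ gradSq S w x := fun x =>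
      Finset.single_le_sum (f := fun s => (w (x * s) - w x) ^ 2) (fun _ _ => sq_nonneg _) hs
    have b1 : Summable (fun x => (w (x * s) - w x) ^ 2) :=
      Summable.of_nonneg_of_le (fun _ => sq_nonneg _) hle hw
    have b2 : ∑' x, (w (x * s) - w x) ^ 2 ≤ ∑' x, gradSq S w x := b1.tsum_le_tsum hle hw
    have a1 : Summable (fun x => (w (x * s * l.prod) - w (x * s)) ^ 2) :=
      (Equiv.mulRight s).summable_iff (f := fun x => (w (x * l.prod) - w x) ^ 2) |>.2 ih1
    have a2 : ∑' x, (w (x * s * l.prod) - w (x * s)) ^ 2 = ∑' x, (w (x * l.prod) - w x) ^ 2 :=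
      (Equiv.mulRight s).tsum_eq (fun x => (w (x * l.prod) - w x) ^ 2)
    rcases Nat.eq_zero_or_pos l.length with h0 | hpos
    · have : l = [] := List.length_eq_zero_iff.1 h0
      subst this
      simpa using ⟨b1, b2⟩
    · set n : ℝ := (l.length : ℝ) with hn
      have hn1 : 0 < n := Nat.cast_pos.2 hpos
      have pt : ∀ x, (w (x * (s :: l).prod) - w x) ^ 2 ≤
          (1 + 1 / n) * (w (x * s * l.prod) - w (x * s)) ^ 2 + (1 + n) * (w (x * s) - w x) ^ 2 := by
        intro x
        rw [List.prod_cons, ← mul_assoc]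
        set A := w (x * s * l.prod)
        set B := w (x * s)
        set C := w x
        have : (1 + 1 / n) * (A - B) ^ 2 + (1 + n) * (B - C) ^ 2 - (A - C) ^ 2
            = (1 / n) * ((A - B) - n * (B - C)) ^ 2 := by
          field_simp; ring
        have h2 : 0 ≤ (1 / n) * ((A - B) - n * (B - C)) ^ 2 := by positivity
        linarith
      have sm := (a1.mul_left (1 + 1 / n)).add (b1.mul_left (1 + n))
      have s0 : Summable (fun x => (w (x * (s :: l).prod) - w x) ^ 2) :=
        Summable.of_nonneg_of_le (fun _ => sq_nonneg _) pt sm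
      refine ⟨s0, (s0.tsum_le_tsum pt sm).trans ?_⟩
      rw [(a1.mul_left (1 + 1 / n)).tsum_add (b1.mul_left (1 + n)), tsum_mul_left, tsum_mul_left, a2]
      have e : ((s :: l).length : ℝ) = n + 1 := by simp [hn]
      rw [e]
      calc _ ≤ (1 + 1 / n) * (n ^ 2 * ∑' x, gradSq S w x) + (1 + n) * ∑' x, gradSq S w x := by
            gcongr
        _ = _ := by field_simp; ring

/-- level set estimate -/
lemma level_est [Group G] (S : Finset G) (hS_gen : Subgroup.closure (S : Set G) = ⊤)
    (hS_sym : ∀ s ∈ S, s⁻¹ ∈ S) (w : G → ℝ) (hw : Summable (gradSq S w)) (A A' : Finset G) (t : ℝ)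
    (hA : ∀ x, x ∉ A → w x = 0) (hA' : ∀ x ∈ A', w x = t) (n : ℕ)
    (B : Finset G) (hB : ∀ g ∈ B, wordDist S 1 g ≤ n) (hcard : 2 * A.card ≤ B.card)
    (hBp : 0 < B.card) :
    (A'.card : ℝ) * t ^ 2 ≤ 2 * (n : ℝ) ^ 2 * ∑' x, gradSq S w x := by
  classical
  set D := ∑' x, gradSq S w x
  have hD : 0 ≤ D := tsum_nonneg fun x => gradSq_nonneg S w x
  have up : ∀ g ∈ B, ∑ x ∈ A', (w (x * g) - w x) ^ 2 ≤ (n : ℝ) ^ 2 * D := by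
    intro g hg
    obtain ⟨l, h1, h2, h3⟩ := wordDist_word S hS_gen hS_sym g
    obtain ⟨p1, p2⟩ := pseudo_poincare S w hw l h1
    rw [← h3] at p1 p2
    refine (p1.sum_le_tsum A' fun _ _ => sq_nonneg _).trans (p2.trans ?_)
    have : (l.length : ℝ) ≤ n := by rw [h2]; exact_mod_cast hB g hg
    gcongr
  have low : ∀ x ∈ A', (B.card : ℝ) / 2 * t ^ 2 ≤ ∑ g ∈ B, (w (x * g) - w x) ^ 2 := by
    intro x hx
    have h1 : ∑ g ∈ B.filter (fun g => x * g ∉ A), (w (x * g) - w x) ^ 2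
        ≤ ∑ g ∈ B, (w (x * g) - w x) ^ 2 :=
      Finset.sum_le_sum_of_subset_of_nonneg (Finset.filter_subset _ _) fun _ _ _ => sq_nonneg _
    have h2 : ∑ g ∈ B.filter (fun g => x * g ∉ A), (w (x * g) - w x) ^ 2
        = (B.filter (fun g => x * g ∉ A)).card * t ^ 2 := by
      rw [Finset.sum_congr rfl (g := fun _ => t ^ 2), Finset.sum_const, nsmul_eq_mul]
      intro g hg
      rw [hA _ (Finset.mem_filter.1 hg).2, hA' x hx]; ring
    have h3 : (B.filter (fun g => x * g ∈ A)).card ≤ A.card := by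
      apply Finset.card_le_card_of_injOn (fun g => x * g)
      · intro g hg; simpa using (Finset.mem_filter.1 hg).2
      · intro a _ b _ hab; simpa using hab
    have h4 := Finset.card_filter_add_card_filter_not (s := B) (fun g => x * g ∈ A)
    have h5 : (B.card : ℝ) / 2 ≤ ((B.filter (fun g => x * g ∉ A)).card : ℝ) := by
      have : B.card ≤ 2 * (B.filter (fun g => x * g ∉ A)).card := by omega
      have : (B.card : ℝ) ≤ 2 * ((B.filter (fun g => x * g ∉ A)).card : ℝ) := by exact_mod_cast this
      linarith
    calc _ ≤ ((B.filter (fun g => x * g ∉ A)).card : ℝ) * t ^ 2 := by gcongr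
      _ ≤ _ := by rw [← h2]; exact h1
  have tot : (A'.card : ℝ) * ((B.card : ℝ) / 2 * t ^ 2) ≤ B.card * ((n : ℝ) ^ 2 * D) := by
    calc _ = ∑ x ∈ A', (B.card : ℝ) / 2 * t ^ 2 := by simp
      _ ≤ ∑ x ∈ A', ∑ g ∈ B, (w (x * g) - w x) ^ 2 := Finset.sum_le_sum low
      _ = ∑ g ∈ B, ∑ x ∈ A', (w (x * g) - w x) ^ 2 := Finset.sum_comm
      _ ≤ ∑ g ∈ B, (n : ℝ) ^ 2 * D := Finset.sum_le_sum up
      _ = _ := by simp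
  have hb : (0 : ℝ) < B.card := by exact_mod_cast hBp
  have : (B.card : ℝ) * ((A'.card : ℝ) * t ^ 2) ≤ B.card * (2 * (n : ℝ) ^ 2 * D) := by linarith
  exact le_of_mul_le_mul_left this hb

/-- choice of radius -/
lemma exists_radius (N : ℕ) (hN : 3 ≤ N) (C₁ : ℝ) (hC₁ : 0 < C₁) (m : ℕ) (hm : 1 ≤ m) :
    ∃ n : ℕ, 1 ≤ n ∧ 2 * (m : ℝ) ≤ C₁ * (n : ℝ) ^ N ∧
      (n : ℝ) ^ 2 ≤ ((2 / C₁) ^ (1 / (N : ℝ)) + 1) ^ 2 * (m : ℝ) ^ (2 / (N : ℝ)) := by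
  have hm' : (1 : ℝ) ≤ m := by exact_mod_cast hm
  have hN0 : (0 : ℝ) < N := by positivity
  set y : ℝ := (2 / C₁ * m) ^ (1 / (N : ℝ)) with hy
  have hyp : 0 < y := by positivity
  have hyN : y ^ N = 2 / C₁ * m := by
    rw [hy, one_div]; exact Real.rpow_inv_natCast_pow (by positivity) (by omega)
  refine ⟨⌈y⌉₊, Nat.one_le_iff_ne_zero.2 (by positivity), ?_, ?_⟩
  · have : y ^ N ≤ (⌈y⌉₊ : ℝ) ^ N := by gcongr; exact Nat.le_ceil y
    rw [hyN] at this
    calc 2 * (m : ℝ) = C₁ * (2 / C₁ * m) := by field_simp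
      _ ≤ _ := by gcongr
  · have h1 : (⌈y⌉₊ : ℝ) ≤ y + 1 := (Nat.ceil_lt_add_one hyp.le).le
    have h2 : y = (2 / C₁) ^ (1 / (N : ℝ)) * (m : ℝ) ^ (1 / (N : ℝ)) :=
      Real.mul_rpow (by positivity) (by positivity)
    have h3 : (1 : ℝ) ≤ (m : ℝ) ^ (1 / (N : ℝ)) := Real.one_le_rpow hm' (by positivity)
    have h4 : (⌈y⌉₊ : ℝ) ≤ ((2 / C₁) ^ (1 / (N : ℝ)) + 1) * (m : ℝ) ^ (1 / (N : ℝ)) := by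
      rw [add_mul, ← h2]; linarith
    have h5 : (m : ℝ) ^ (2 / (N : ℝ)) = ((m : ℝ) ^ (1 / (N : ℝ))) ^ 2 := by
      rw [← Real.rpow_natCast, ← Real.rpow_mul (by positivity)]; congr 1; push_cast; ring
    rw [h5, ← mul_pow]
    gcongr

/-- truncation telescoping -/
def trunc (k : ℤ) (a : ℝ) : ℝ := min a (2 ^ (k + 1)) - min a (2 ^ k)

lemma trunc_mono (k : ℤ) : Monotone (trunc k) := by
  intro a b h
  unfold trunc
  have : (2 : ℝ) ^ k ≤ 2 ^ (k + 1) := zpow_le_zpow_right₀ (by norm_num) (by omega)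
  simp only [min_def]
  split_ifs <;> linarith

lemma sum_trunc_sub (a b : ℝ) (h : b ≤ a) (T : Finset ℤ) :
    ∑ k ∈ T, (trunc k a - trunc k b) ≤ a - b := by
  classical
  have tel : ∀ (m : ℤ) (n : ℕ), ∑ i ∈ Finset.range n, (trunc (m + i) a - trunc (m + i) b) =
      (min a (2 ^ (m + n)) - min b (2 ^ (m + n))) - (min a (2 ^ m) - min b (2 ^ m)) := by
    intro m n
    induction n with
    | zero => simp
    | succ n ih =>
      rw [Finset.sum_range_succ, ih]; unfold trunc; push_cast; rw [← add_assoc]; ring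
  obtain ⟨K, hK⟩ : ∃ K : ℕ, ∀ k ∈ T, k.natAbs < K :=
    ⟨T.sup Int.natAbs + 1, fun k hk => Nat.lt_succ_of_le (Finset.le_sup (f := Int.natAbs) hk)⟩
  have hinj : Set.InjOn (fun i : ℕ => -(K : ℤ) + i) (Finset.range (2 * K) : Set ℕ) := by
    intro i _ j _ h; simpa using h
  have hsub : T ⊆ (Finset.range (2 * K)).image (fun i : ℕ => -(K : ℤ) + i) := by
    intro k hk
    have := hK k hk
    simp only [Finset.mem_image, Finset.mem_range]
    exact ⟨(k + K).toNat, by omega, by omega⟩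
  calc _ ≤ ∑ k ∈ (Finset.range (2 * K)).image (fun i : ℕ => -(K : ℤ) + i), (trunc k a - trunc k b) :=
        Finset.sum_le_sum_of_subset_of_nonneg hsub fun k _ _ => sub_nonneg.2 (trunc_mono k h)
    _ = _ := by rw [Finset.sum_image hinj, tel]
    _ ≤ a - b := by
        have h1 : ∀ c : ℝ, 0 ≤ min a c - min b c ∧ min a c - min b c ≤ a - b := by
          intro c; simp only [min_def]; constructor <;> split_ifs <;> linarith
        have := (h1 (2 ^ (-(K : ℤ) + (2 * K : ℕ)))).2
        have := (h1 (2 ^ (-(K : ℤ)))).1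
        linarith

lemma sum_trunc_sq (a b : ℝ) (T : Finset ℤ) :
    ∑ k ∈ T, (trunc k a - trunc k b) ^ 2 ≤ (a - b) ^ 2 := by
  wlog h : b ≤ a generalizing a b
  · have := this b a (le_of_not_ge h)
    calc _ = ∑ k ∈ T, (trunc k b - trunc k a) ^ 2 := Finset.sum_congr rfl fun _ _ => by ring
      _ ≤ _ := this
      _ = _ := by ring
  have h0 : ∀ k, 0 ≤ trunc k a - trunc k b := fun k => sub_nonneg.2 (trunc_mono k h)
  have h1 : ∀ k, trunc k a - trunc k b ≤ a - b := fun k => by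
    simpa using sum_trunc_sub a b h {k}
  calc _ ≤ ∑ k ∈ T, (a - b) * (trunc k a - trunc k b) := by
        refine Finset.sum_le_sum fun k _ => ?_
        rw [sq]; exact mul_le_mul_of_nonneg_right (h1 k) (h0 k)
    _ = (a - b) * ∑ k ∈ T, (trunc k a - trunc k b) := by rw [Finset.mul_sum]
    _ ≤ (a - b) * (a - b) := mul_le_mul_of_nonneg_left (sum_trunc_sub a b h T) (by linarith)
    _ = _ := by ring

lemma trunc_zero_of_le (k : ℤ) (a : ℝ) (h : a ≤ 2 ^ k) : trunc k a = 0 := by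
  have : (2 : ℝ) ^ k ≤ 2 ^ (k + 1) := zpow_le_zpow_right₀ (by norm_num) (by omega)
  unfold trunc; rw [min_eq_left h, min_eq_left (h.trans this)]; ring

lemma trunc_eq_of_ge (k : ℤ) (a : ℝ) (h : 2 ^ (k + 1) ≤ a) : trunc k a = 2 ^ k := by
  have : (2 : ℝ) ^ k ≤ 2 ^ (k + 1) := zpow_le_zpow_right₀ (by norm_num) (by omega)
  unfold trunc; rw [min_eq_right h, min_eq_right (this.trans h), zpow_add_one₀ (by norm_num)]; ring

lemma ball_finset [Group G] (S : Finset G) (N : ℕ) 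
    (C₁ C₂ : ℝ) (hC₁ : 0 < C₁)
    (hgrowth : ∀ n : ℕ, 1 ≤ n →
      C₁ * (n : ℝ) ^ N ≤ (Nat.card {x : G // wordDist S 1 x ≤ n} : ℝ) ∧
      (Nat.card {x : G // wordDist S 1 x ≤ n} : ℝ) ≤ C₂ * (n : ℝ) ^ N) (n : ℕ) (hn : 1 ≤ n) :
    ∃ B : Finset G, (∀ g, g ∈ B ↔ wordDist S 1 g ≤ n) ∧ C₁ * (n : ℝ) ^ N ≤ B.card ∧
      (B.card : ℝ) ≤ C₂ * (n : ℝ) ^ N := by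
  obtain ⟨h1, h2⟩ := hgrowth n hn
  have hpos : 0 < Nat.card {x : G // wordDist S 1 x ≤ n} := by
    have : (0 : ℝ) < Nat.card {x : G // wordDist S 1 x ≤ n} := lt_of_lt_of_le (by positivity) h1
    exact_mod_cast this
  have hfin : Finite {x : G // wordDist S 1 x ≤ n} := (Nat.card_pos_iff.1 hpos).2
  have hf : {x : G | wordDist S 1 x ≤ n}.Finite := hfin
  have hc : Nat.card {x : G // wordDist S 1 x ≤ n} = hf.toFinset.card := by
    rw [← Set.ncard_eq_toFinset_card _ hf]; rfl
  rw [hc] at h1 h2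
  exact ⟨hf.toFinset, by simp, h1, h2⟩

lemma sobolev [Group G] (S : Finset G) (hS_gen : Subgroup.closure (S : Set G) = ⊤)
    (hS_sym : ∀ s ∈ S, s⁻¹ ∈ S) (N : ℕ) (hN : 3 ≤ N)
    (C₁ C₂ : ℝ) (hC₁ : 0 < C₁)
    (hgrowth : ∀ n : ℕ, 1 ≤ n →
      C₁ * (n : ℝ) ^ N ≤ (Nat.card {x : G // wordDist S 1 x ≤ n} : ℝ) ∧
      (Nat.card {x : G // wordDist S 1 x ≤ n} : ℝ) ≤ C₂ * (n : ℝ) ^ N) (E : ℝ) :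
    ∃ B : ℝ, ∀ w : G → ℝ, MemD12 S N w → ∑' x, gradSq S w x ≤ E →
      ∑' x, |w x| ^ (2 * (N : ℝ) / ((N : ℝ) - 2)) ≤ B := by
  classical
  have hN3 : (3 : ℝ) ≤ N := by exact_mod_cast hN
  set r : ℝ := 2 * (N : ℝ) / ((N : ℝ) - 2) with hr
  have hr0 : 0 < r := by rw [hr]; apply div_pos <;> linarith
  have hr2 : r - 2 = r * (2 / N) := by
    rw [hr]; have : (N : ℝ) - 2 ≠ 0 := by linarith
    field_simp; ring
  set K : ℝ := 2 * ((2 / C₁) ^ (1 / (N : ℝ)) + 1) ^ 2 with hK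
  have hK0 : 0 < K := by positivity
  refine ⟨(2 ^ r * 2 ^ r * K * E) ^ (1 / (1 - 2 / (N : ℝ))), ?_⟩
  rintro w ⟨hw1, hw2⟩ hE
  have hw1' : Summable fun x => |w x| ^ r := hw1
  set Q : ℝ := ∑' x, |w x| ^ r with hQ
  have hE0 : 0 ≤ E := (tsum_nonneg fun x => gradSq_nonneg S w x).trans hE
  have hQ0 : 0 ≤ Q := tsum_nonneg fun x => by positivity
  -- level sets
  have hfin : ∀ k : ℤ, {x | (2 : ℝ) ^ k < |w x|}.Finite := by
    intro k
    have := hw1'.tendsto_cofinite_zero.eventually (gt_mem_nhds (show (0 : ℝ) < (2 ^ k) ^ r by positivity))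
    refine (Filter.eventually_cofinite.1 this).subset ?_
    intro x hx
    simp only [Set.mem_ofPred_eq, not_lt] at hx ⊢
    exact Real.rpow_le_rpow (by positivity) hx.le hr0.le
  set A : ℤ → Finset G := fun k => (hfin k).toFinset with hA
  have memA : ∀ k x, x ∈ A k ↔ (2 : ℝ) ^ k < |w x| := by intro k x; simp [hA]
  -- truncations
  set W : ℤ → G → ℝ := fun k x => trunc k |w x| with hW
  have hsumT : ∀ T : Finset ℤ, ∀ x, ∑ k ∈ T, gradSq S (W k) x ≤ gradSq S w x := by
    intro T x
    unfold gradSq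
    rw [Finset.sum_comm]
    refine Finset.sum_le_sum fun s _ => ?_
    refine (sum_trunc_sq _ _ T).trans ?_
    exact sq_le_sq.2 (abs_abs_sub_abs_le_abs_sub (w (x * s)) (w x))
  have hWs : ∀ k, Summable (gradSq S (W k)) := fun k =>
    Summable.of_nonneg_of_le (fun x => gradSq_nonneg S _ x) (fun x => by simpa using hsumT {k} x) hw2
  have hD : ∀ T : Finset ℤ, ∑ k ∈ T, ∑' x, gradSq S (W k) x ≤ E := by
    intro T
    rw [← Summable.tsum_finsetSum fun k _ => hWs k]
    exact ((summable_sum fun k _ => hWs k).tsum_le_tsum (hsumT T) hw2).trans hE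
  have hDn : ∀ k, 0 ≤ ∑' x, gradSq S (W k) x := fun k => tsum_nonneg fun x => gradSq_nonneg S _ x
  -- level set bounds
  have hlev : ∀ k : ℤ, ((A (k + 1)).card : ℝ) * ((2 : ℝ) ^ k) ^ 2 ≤
      K * ((A k).card : ℝ) ^ (2 / (N : ℝ)) * ∑' x, gradSq S (W k) x := by
    intro k
    have hsub : A (k + 1) ⊆ A k := by
      intro x hx
      rw [memA] at hx ⊢
      exact (zpow_le_zpow_right₀ (by norm_num) (by omega)).trans_lt hx
    rcases Nat.eq_zero_or_pos (A k).card with h0 | hpos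
    · have : (A (k + 1)).card = 0 := by have := Finset.card_le_card hsub; omega
      rw [this]
      have := hDn k
      simp only [Nat.cast_zero, zero_mul]
      positivity
    · obtain ⟨n, hn1, hn2, hn3⟩ := exists_radius N hN C₁ hC₁ (A k).card hpos
      obtain ⟨B, hB1, hB2, -⟩ := ball_finset S N C₁ C₂ hC₁ hgrowth n hn1
      have hc : 2 * (A k).card ≤ B.card := by
        have : 2 * ((A k).card : ℝ) ≤ B.card := hn2.trans hB2
        exact_mod_cast this
      have := level_est S hS_gen hS_sym (W k) (hWs k) (A k) (A (k + 1)) (2 ^ k) ?_ ?_ n B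
        (fun g hg => (hB1 g).1 hg) hc (by omega)
      · refine this.trans ?_
        refine mul_le_mul_of_nonneg_right ?_ (hDn k)
        rw [hK, mul_assoc]; gcongr
      · intro x hx
        rw [memA, not_lt] at hx
        exact trunc_zero_of_le k _ hx
      · intro x hx
        rw [memA] at hx
        exact trunc_eq_of_ge k _ hx.le
  have hAQ : ∀ k : ℤ, ((2 : ℝ) ^ k) ^ r * ((A k).card : ℝ) ≤ Q := by
    intro k
    refine le_trans ?_ (hw1'.sum_le_tsum (A k) fun _ _ => by positivity)
    rw [mul_comm, ← nsmul_eq_mul]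
    refine Finset.card_nsmul_le_sum _ _ _ fun x hx => ?_
    rw [memA] at hx
    exact Real.rpow_le_rpow (by positivity) hx.le hr0.le
  have hrec : ∀ k : ℤ, ((2 : ℝ) ^ (k + 1)) ^ r * ((A (k + 1)).card : ℝ) ≤
      2 ^ r * K * Q ^ (2 / (N : ℝ)) * ∑' x, gradSq S (W k) x := by
    intro k
    set t : ℝ := (2 : ℝ) ^ k with ht
    have ht0 : 0 < t := by positivity
    have e1 : ((2 : ℝ) ^ (k + 1)) ^ r = 2 ^ r * (t ^ (r - 2) * t ^ 2) := by
      rw [zpow_add_one₀ (by norm_num), mul_comm, Real.mul_rpow (by norm_num) ht0.le,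
        ← Real.rpow_natCast t 2, ← Real.rpow_add ht0]; norm_num
    have e2 : t ^ (r - 2) * ((A k).card : ℝ) ^ (2 / (N : ℝ)) ≤ Q ^ (2 / (N : ℝ)) := by
      rw [hr2, Real.rpow_mul ht0.le, ← Real.mul_rpow (by positivity) (by positivity)]
      exact Real.rpow_le_rpow (by positivity) (hAQ k) (by positivity)
    have hDk := hDn k
    calc _ = 2 ^ r * t ^ (r - 2) * (((A (k + 1)).card : ℝ) * t ^ 2) := by rw [e1]; ring
      _ ≤ 2 ^ r * t ^ (r - 2) * (K * ((A k).card : ℝ) ^ (2 / (N : ℝ)) * ∑' x, gradSq S (W k) x) := by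
          exact mul_le_mul_of_nonneg_left (hlev k) (by positivity)
      _ = 2 ^ r * K * (t ^ (r - 2) * ((A k).card : ℝ) ^ (2 / (N : ℝ))) * ∑' x, gradSq S (W k) x := by
          ring
      _ ≤ _ := by gcongr
  -- summation
  have hfinal : Q ≤ 2 ^ r * 2 ^ r * K * E * Q ^ (2 / (N : ℝ)) := by
    refine Real.tsum_le_of_sum_le (fun x => by positivity) fun F => ?_
    have hk : ∀ x, ∃ k : ℤ, w x ≠ 0 → (2 : ℝ) ^ (k + 1) < |w x| ∧ |w x| ≤ 2 ^ (k + 1 + 1) := by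
      intro x
      by_cases h : w x = 0
      · exact ⟨0, fun h' => absurd h h'⟩
      · obtain ⟨k, h1, h2⟩ := exists_mem_Ioc_zpow (abs_pos.2 h) (one_lt_two (α := ℝ))
        exact ⟨k - 1, fun _ => by simpa using ⟨h1, h2⟩⟩
    choose κ hκ using hk
    set F' := F.filter (fun x => w x ≠ 0) with hF'
    set T := F'.image κ with hT
    have s1 : ∑ x ∈ F, |w x| ^ r = ∑ x ∈ F', |w x| ^ r := by
      rw [hF', Finset.sum_filter_of_ne]
      intro x _ hx h0
      apply hx; rw [h0, abs_zero, Real.zero_rpow hr0.ne']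
    have s2 : ∑ x ∈ F', |w x| ^ r = ∑ k ∈ T, ∑ x ∈ F' with κ x = k, |w x| ^ r :=
      (Finset.sum_fiberwise_of_maps_to (fun x hx => Finset.mem_image_of_mem κ hx) _).symm
    have s3 : ∀ k ∈ T, ∑ x ∈ F' with κ x = k, |w x| ^ r ≤
        2 ^ r * (2 ^ r * K * Q ^ (2 / (N : ℝ)) * ∑' x, gradSq S (W k) x) := by
      intro k _
      have hsub : (F'.filter fun x => κ x = k) ⊆ A (k + 1) := by
        intro x hx
        rw [Finset.mem_filter, hF', Finset.mem_filter] at hx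
        rw [memA, ← hx.2]
        exact (hκ x hx.1.2).1
      calc _ ≤ ∑ x ∈ F' with κ x = k, ((2 : ℝ) ^ (k + 1 + 1)) ^ r := by
            refine Finset.sum_le_sum fun x hx => ?_
            rw [Finset.mem_filter, hF', Finset.mem_filter] at hx
            rw [← hx.2]
            exact Real.rpow_le_rpow (by positivity) (hκ x hx.1.2).2 hr0.le
        _ = ((F'.filter fun x => κ x = k).card : ℝ) * ((2 : ℝ) ^ (k + 1 + 1)) ^ r := by simp
        _ ≤ ((A (k + 1)).card : ℝ) * ((2 : ℝ) ^ (k + 1 + 1)) ^ r := by gcongr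
        _ = 2 ^ r * (((2 : ℝ) ^ (k + 1)) ^ r * (A (k + 1)).card) := by
            rw [zpow_add_one₀ (by norm_num) (k + 1), Real.mul_rpow (by positivity) (by norm_num)]; ring
        _ ≤ _ := by exact mul_le_mul_of_nonneg_left (hrec k) (by positivity)
    rw [s1, s2]
    refine (Finset.sum_le_sum s3).trans ?_
    rw [← Finset.mul_sum, ← Finset.mul_sum]
    calc _ ≤ 2 ^ r * (2 ^ r * K * Q ^ (2 / (N : ℝ)) * E) := by gcongr; exact hD T
      _ = _ := by ring
  have hex : 0 < 1 - 2 / (N : ℝ) := by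
    have : 2 / (N : ℝ) < 1 := by rw [div_lt_one] <;> linarith
    linarith
  rcases hQ0.eq_or_lt with h0 | hpos
  · rw [← h0]; positivity
  · have : Q ^ (1 - 2 / (N : ℝ)) ≤ 2 ^ r * 2 ^ r * K * E := by
      rw [Real.rpow_sub hpos, Real.rpow_one, div_le_iff₀ (by positivity)]
      exact hfinal
    calc Q = (Q ^ (1 - 2 / (N : ℝ))) ^ (1 / (1 - 2 / (N : ℝ))) := by
          rw [← Real.rpow_mul hQ0, mul_one_div_cancel hex.ne', Real.rpow_one]
      _ ≤ _ := Real.rpow_le_rpow (by positivity) this (by positivity)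

lemma annulus_card [Group G] (S : Finset G) (N : ℕ)
    (C₁ C₂ : ℝ) (hC₁ : 0 < C₁) (hC₂ : 0 < C₂)
    (hgrowth : ∀ n : ℕ, 1 ≤ n →
      C₁ * (n : ℝ) ^ N ≤ (Nat.card {x : G // wordDist S 1 x ≤ n} : ℝ) ∧
      (Nat.card {x : G // wordDist S 1 x ≤ n} : ℝ) ≤ C₂ * (n : ℝ) ^ N)
    (x : G) (F : Finset G) (ρ : ℝ) (hρ : 0 < ρ) 
    (hF : ∀ y ∈ F, 1 ≤ (wordDist S x y : ℝ) ∧ (wordDist S x y : ℝ) ≤ ρ) :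
    (F.card : ℝ) ≤ C₂ * ρ ^ N := by
  rcases F.eq_empty_or_nonempty with rfl | ⟨y, hy⟩
  · simp; positivity
  · have h1 : 1 ≤ ρ := (hF y hy).1.trans (hF y hy).2
    have hn : 1 ≤ ⌊ρ⌋₊ := by rwa [Nat.one_le_floor_iff]
    obtain ⟨B, hB1, -, hB2⟩ := ball_finset S N C₁ C₂ hC₁ hgrowth _ hn
    have hc : F.card ≤ B.card := by
      apply Finset.card_le_card_of_injOn (fun g => x⁻¹ * g)
      · intro g hg
        have := (hF g hg).2
        rw [wordDist_left] at this
        exact (hB1 _).2 (Nat.le_floor this)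
      · intro a _ b _ hab; simpa using hab
    calc (F.card : ℝ) ≤ B.card := by exact_mod_cast hc
      _ ≤ _ := hB2
      _ ≤ _ := by gcongr; exact Nat.floor_le hρ.le

/-- near part -/
lemma near_sum (δ : G → G → ℝ) (N : ℕ) (C₂ : ℝ) (hC₂ : 0 < C₂)
    (hcard : ∀ (x : G) (F : Finset G) (ρ : ℝ), 0 < ρ → (∀ y ∈ F, 1 ≤ δ x y ∧ δ x y ≤ ρ) →
      (F.card : ℝ) ≤ C₂ * ρ ^ N) (α : ℝ) (hα : 0 < α) (hαN : α < N) :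
    ∃ K : ℝ, 0 ≤ K ∧ ∀ (x : G) (F : Finset G) (ρ : ℝ), 0 < ρ →
      (∀ y ∈ F, 1 ≤ δ x y ∧ δ x y ≤ ρ) → ∑ y ∈ F, δ x y ^ (α - N) ≤ K * ρ ^ α := by
  classical
  have h2 : (1 : ℝ) < 2 ^ α := Real.one_lt_rpow (by norm_num) hα
  set L : ℝ := C₂ * (1 / 2) ^ (α - N) with hL
  have hL0 : 0 < L := by positivity
  set K : ℝ := L * 2 ^ α / (2 ^ α - 1) with hK
  have hd : (0 : ℝ) < 2 ^ α - 1 := by linarith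
  have hK0 : 0 ≤ K := by positivity
  have hKL : L + K / 2 ^ α = K := by
    rw [hK]; field_simp; ring
  have main : ∀ k : ℕ, ∀ (x : G) (F : Finset G) (ρ : ℝ), 0 < ρ → ρ < 2 ^ k →
      (∀ y ∈ F, 1 ≤ δ x y ∧ δ x y ≤ ρ) → ∑ y ∈ F, δ x y ^ (α - N) ≤ K * ρ ^ α := by
    intro k
    induction k with
    | zero =>
      intro x F ρ hρ hρ2 hF
      have : F = ∅ := by
        by_contra h
        obtain ⟨y, hy⟩ := Finset.nonempty_iff_ne_empty.2 h
        have := hF y hy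
        simp at hρ2; linarith
      rw [this]; simp; positivity
    | succ k ih =>
      intro x F ρ hρ hρ2 hF
      rw [← Finset.sum_filter_add_sum_filter_not F (fun y => δ x y ≤ ρ / 2)]
      have a1 := ih x (F.filter fun y => δ x y ≤ ρ / 2) (ρ / 2) (by positivity)
        (by rw [pow_succ] at hρ2; linarith) (fun y hy => by
          rw [Finset.mem_filter] at hy; exact ⟨(hF y hy.1).1, hy.2⟩)
      have a2 : ∑ y ∈ F with ¬ δ x y ≤ ρ / 2, δ x y ^ (α - N) ≤ L * ρ ^ α := by
        calc _ ≤ ∑ y ∈ F with ¬ δ x y ≤ ρ / 2, (ρ / 2) ^ (α - N) := by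
              refine Finset.sum_le_sum fun y hy => ?_
              rw [Finset.mem_filter, not_le] at hy
              exact Real.rpow_le_rpow_of_nonpos (by positivity) hy.2.le (by linarith)
          _ = ((F.filter fun y => ¬ δ x y ≤ ρ / 2).card : ℝ) * (ρ / 2) ^ (α - N) := by simp
          _ ≤ (C₂ * ρ ^ N) * (ρ / 2) ^ (α - N) := by
              gcongr
              exact hcard x _ ρ hρ fun y hy => hF y (Finset.mem_filter.1 hy).1
          _ = _ := by
              rw [hL, show ρ / 2 = 1 / 2 * ρ by ring, Real.mul_rpow (by norm_num) hρ.le,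
                Real.rpow_sub hρ, Real.rpow_natCast]
              field_simp
      calc _ ≤ K * (ρ / 2) ^ α + L * ρ ^ α := add_le_add a1 a2
        _ = (L + K / 2 ^ α) * ρ ^ α := by rw [Real.div_rpow hρ.le (by norm_num)]; ring
        _ = _ := by rw [hKL]
  refine ⟨K, hK0, fun x F ρ hρ hF => ?_⟩
  obtain ⟨k, hk⟩ := pow_unbounded_of_one_lt ρ (one_lt_two (α := ℝ))
  exact main k x F ρ hρ hk hF

/-- far part -/
lemma far_sum (δ : G → G → ℝ) (N : ℕ) (hN : 3 ≤ N) (C₂ : ℝ) (hC₂ : 0 < C₂)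
    (hcard : ∀ (x : G) (F : Finset G) (ρ : ℝ), 0 < ρ → (∀ y ∈ F, 1 ≤ δ x y ∧ δ x y ≤ ρ) →
      (F.card : ℝ) ≤ C₂ * ρ ^ N) :
    ∃ K : ℝ, 0 ≤ K ∧ ∀ (x : G) (F : Finset G) (ρ : ℝ), 0 < ρ →
      (∀ y ∈ F, 1 ≤ δ x y ∧ ρ < δ x y) → ∑ y ∈ F, δ x y ^ (-(2 * N : ℝ)) ≤ K * ρ ^ (-(N : ℝ)) := by
  classical
  set K : ℝ := C₂ * 2 ^ (N + 1) with hK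
  have hK0 : 0 ≤ K := by positivity
  have main : ∀ k : ℕ, ∀ (x : G) (F : Finset G) (ρ : ℝ), 0 < ρ →
      (∀ y ∈ F, 1 ≤ δ x y ∧ ρ < δ x y ∧ δ x y ≤ 2 ^ k * ρ) →
      ∑ y ∈ F, δ x y ^ (-(2 * N : ℝ)) ≤ K * ρ ^ (-(N : ℝ)) := by
    intro k
    induction k with
    | zero =>
      intro x F ρ hρ hF
      have : F = ∅ := by
        by_contra h
        obtain ⟨y, hy⟩ := Finset.nonempty_iff_ne_empty.2 h
        have := hF y hy
        simp at this; linarith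
      rw [this]; simp; positivity
    | succ k ih =>
      intro x F ρ hρ hF
      rw [← Finset.sum_filter_add_sum_filter_not F (fun y => δ x y ≤ 2 * ρ)]
      have a1 := ih x (F.filter fun y => ¬ δ x y ≤ 2 * ρ) (2 * ρ) (by positivity)
        (fun y hy => by
          rw [Finset.mem_filter, not_le] at hy
          have := hF y hy.1
          refine ⟨this.1, hy.2, this.2.2.trans (le_of_eq (by ring))⟩)
      have a2 : ∑ y ∈ F with δ x y ≤ 2 * ρ, δ x y ^ (-(2 * N : ℝ)) ≤ C₂ * 2 ^ N * ρ ^ (-(N : ℝ)) := by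
        calc _ ≤ ∑ y ∈ F with δ x y ≤ 2 * ρ, ρ ^ (-(2 * N : ℝ)) := by
              refine Finset.sum_le_sum fun y hy => ?_
              rw [Finset.mem_filter] at hy
              exact Real.rpow_le_rpow_of_nonpos hρ (hF y hy.1).2.1.le
                (by simp)
          _ = ((F.filter fun y => δ x y ≤ 2 * ρ).card : ℝ) * ρ ^ (-(2 * N : ℝ)) := by simp
          _ ≤ (C₂ * (2 * ρ) ^ N) * ρ ^ (-(2 * N : ℝ)) := by
              gcongr
              refine hcard x _ _ (by positivity) fun y hy => ?_
              rw [Finset.mem_filter] at hy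
              exact ⟨(hF y hy.1).1, hy.2⟩
          _ = _ := by
              rw [mul_pow, ← Real.rpow_natCast ρ N, show (-(N : ℝ)) = N + (-(2 * N : ℝ)) by ring,
                Real.rpow_add hρ]
              ring
      have e : (2 * ρ) ^ (-(N : ℝ)) = (2 ^ N)⁻¹ * ρ ^ (-(N : ℝ)) := by
        rw [Real.mul_rpow (by norm_num) hρ.le, Real.rpow_neg (by norm_num), Real.rpow_natCast]
      rw [e] at a1
      have h2 : (2 : ℝ) ≤ 2 ^ N := by
        calc (2 : ℝ) = 2 ^ 1 := by norm_num
          _ ≤ 2 ^ N := pow_le_pow_right₀ (by norm_num) (by omega)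
      calc _ ≤ C₂ * 2 ^ N * ρ ^ (-(N : ℝ)) + K * ((2 ^ N)⁻¹ * ρ ^ (-(N : ℝ))) := add_le_add a2 a1
        _ = (C₂ * 2 ^ N + C₂ * 2) * ρ ^ (-(N : ℝ)) := by
            rw [hK, pow_succ]; field_simp
        _ ≤ (C₂ * 2 ^ N + C₂ * 2 ^ N) * ρ ^ (-(N : ℝ)) := by gcongr
        _ = _ := by rw [hK, pow_succ]; ring
  refine ⟨K, hK0, fun x F ρ hρ hF => ?_⟩
  have : ∃ k : ℕ, ∀ y ∈ F, δ x y ≤ 2 ^ k * ρ := by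
    have h1 : ∀ y, ∃ k : ℕ, δ x y / ρ < 2 ^ k := fun y =>
      pow_unbounded_of_one_lt _ one_lt_two
    choose κ hκ using h1
    refine ⟨F.sup κ, fun y hy => ?_⟩
    have := (hκ y).le.trans (pow_le_pow_right₀ (one_le_two (α := ℝ)) (Finset.le_sup (f := κ) hy))
    rwa [div_le_iff₀ hρ] at this
  obtain ⟨k, hk⟩ := this
  exact main k x F ρ hρ fun y hy => ⟨(hF y hy).1, (hF y hy).2, hk y hy⟩

lemma young_kernel (N : ℕ) (α : ℝ) (hα : 0 < α) (hαN : α < N) (a d : ℝ) (ha : 0 ≤ a) (hd : 0 ≤ d) :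
    a * d ^ (α - N) ≤ a ^ (2 * N / (N + α)) + d ^ (-(2 * N : ℝ)) := by
  have hN : (0 : ℝ) < N := hα.trans hαN
  have hc : Real.HolderConjugate (2 * N / (N + α)) (2 * N / (N - α)) := by
    rw [Real.holderConjugate_iff]
    have : (N : ℝ) + α ≠ 0 := by positivity
    have : (N : ℝ) - α ≠ 0 := by linarith
    refine ⟨by rw [lt_div_iff₀ (by positivity)]; linarith, ?_⟩
    field_simp; ring
  have h := Real.young_inequality_of_nonneg ha (Real.rpow_nonneg hd (α - N)) hc
  have e : (d ^ (α - N)) ^ (2 * N / (N - α) : ℝ) = d ^ (-(2 * N : ℝ)) := by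
    rw [← Real.rpow_mul hd]; congr 1
    have : (N : ℝ) - α ≠ 0 := by linarith
    field_simp; ring
  rw [e] at h
  have h1 := div_le_self (Real.rpow_nonneg ha (2 * N / (N + α))) hc.lt.le
  have h2 := div_le_self (Real.rpow_nonneg hd (-(2 * N : ℝ))) hc.symm.lt.le
  linarith

lemma conv_bound (δ R : G → G → ℝ) (N : ℕ) (α : ℝ) (hα : 0 < α) (hαN : α < N) (c₂ : ℝ) (hc₂ : 0 < c₂)
    (hδ : ∀ x y, δ x y = 0 ∨ 1 ≤ δ x y)
    (hR_up : ∀ x y : G, x ≠ y → R x y ≤ c₂ * δ x y ^ (α - (N : ℝ)))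
    (hR_diag : ∀ x : G, R x x ≤ c₂)
    (hfar : ∃ K : ℝ, 0 ≤ K ∧ ∀ (x : G) (F : Finset G) (ρ : ℝ), 0 < ρ →
      (∀ y ∈ F, 1 ≤ δ x y ∧ ρ < δ x y) → ∑ y ∈ F, δ x y ^ (-(2 * N : ℝ)) ≤ K * ρ ^ (-(N : ℝ)))
    (Q : ℝ) : ∃ B : ℝ, ∀ f : G → ℝ, (∀ x, 0 ≤ f x) →
      (∀ F : Finset G, ∑ x ∈ F, f x ^ (2 * N / (N + α) : ℝ) ≤ Q) →
      ∀ x, ∀ F : Finset G, ∑ y ∈ F, R x y * f y ≤ B := by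
  classical
  obtain ⟨K, hK0, hK⟩ := hfar
  have hN : (0 : ℝ) < N := hα.trans hαN
  set q : ℝ := 2 * N / (N + α) with hq
  have hq0 : 0 < q := by positivity
  refine ⟨c₂ * Q ^ (1 / q) + c₂ * (Q + K * (1 / 2 : ℝ) ^ (-(N : ℝ))), fun f hf hQ x F => ?_⟩
  have hfx : f x ≤ Q ^ (1 / q) := by
    have : f x ^ q ≤ Q := by simpa using hQ {x}
    calc f x = (f x ^ q) ^ (1 / q) := by
          rw [← Real.rpow_mul (hf x), mul_one_div_cancel hq0.ne', Real.rpow_one]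
      _ ≤ _ := Real.rpow_le_rpow (Real.rpow_nonneg (hf x) _) this (by positivity)
  have hpt : ∀ y, R x y * f y ≤ (if x = y then c₂ * f x else 0) +
      c₂ * (f y ^ q + (if 1 ≤ δ x y then δ x y ^ (-(2 * N : ℝ)) else 0)) := by
    intro y
    have hfq : 0 ≤ f y ^ q := Real.rpow_nonneg (hf y) _
    split_ifs with h1 h2 h2
    · subst h1
      have := mul_le_mul_of_nonneg_right (hR_diag x) (hf x)
      have : 0 ≤ δ x x ^ (-(2 * N : ℝ)) := Real.rpow_nonneg (by linarith) _
      have : 0 ≤ c₂ * (f x ^ q + δ x x ^ (-(2 * N : ℝ))) := by positivity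
      linarith
    · subst h1
      have := mul_le_mul_of_nonneg_right (hR_diag x) (hf x)
      have : 0 ≤ c₂ * (f x ^ q + 0) := by positivity
      linarith
    · rw [zero_add]
      refine (mul_le_mul_of_nonneg_right (hR_up x y h1) (hf y)).trans ?_
      rw [mul_assoc, mul_comm (_ ^ _)]
      exact mul_le_mul_of_nonneg_left (young_kernel N α hα hαN _ _ (hf y) (by linarith)) hc₂.le
    · have h0 := (hδ x y).resolve_right h2
      have := hR_up x y h1
      rw [h0, Real.zero_rpow (by linarith), mul_zero] at this
      have h3 := mul_le_mul_of_nonneg_right this (hf y)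
      have : 0 ≤ c₂ * (f y ^ q + 0) := by positivity
      linarith
  refine (Finset.sum_le_sum fun y _ => hpt y).trans ?_
  rw [Finset.sum_add_distrib, ← Finset.mul_sum, Finset.sum_add_distrib]
  have h1 : (∑ y ∈ F, if x = y then c₂ * f x else 0) ≤ c₂ * Q ^ (1 / q) := by
    have h0 : 0 ≤ c₂ * f x := mul_nonneg hc₂.le (hf x)
    have h4 : c₂ * f x ≤ c₂ * Q ^ (1 / q) := mul_le_mul_of_nonneg_left hfx hc₂.le
    rw [Finset.sum_ite_eq]
    split_ifs
    · exact h4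
    · exact h0.trans h4
  have h2 : (∑ y ∈ F, if 1 ≤ δ x y then δ x y ^ (-(2 * N : ℝ)) else 0) ≤ K * (1 / 2 : ℝ) ^ (-(N : ℝ)) := by
    rw [← Finset.sum_filter]
    refine hK x _ _ (by norm_num) fun y hy => ?_
    rw [Finset.mem_filter] at hy
    exact ⟨hy.2, by linarith⟩
  exact add_le_add h1 (mul_le_mul_of_nonneg_left (add_le_add (hQ F) h2) hc₂.le)

lemma hls_bound (δ R : G → G → ℝ) (N : ℕ) (α : ℝ) (hα : 0 < α) (hαN : α < N) (c₂ : ℝ) (hc₂ : 0 < c₂)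
    (hδ : ∀ x y, δ x y = 0 ∨ 1 ≤ δ x y) (hR_symm : ∀ x y, R x y = R y x)
    (hR_up : ∀ x y : G, x ≠ y → R x y ≤ c₂ * δ x y ^ (α - (N : ℝ)))
    (hR_diag : ∀ x : G, R x x ≤ c₂)
    (hnear : ∃ K : ℝ, 0 ≤ K ∧ ∀ (x : G) (F : Finset G) (ρ : ℝ), 0 < ρ →
      (∀ y ∈ F, 1 ≤ δ x y ∧ δ x y ≤ ρ) → ∑ y ∈ F, δ x y ^ (α - N) ≤ K * ρ ^ α)
    (hfar : ∃ K : ℝ, 0 ≤ K ∧ ∀ (x : G) (F : Finset G) (ρ : ℝ), 0 < ρ →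
      (∀ y ∈ F, 1 ≤ δ x y ∧ ρ < δ x y) → ∑ y ∈ F, δ x y ^ (-(2 * N : ℝ)) ≤ K * ρ ^ (-(N : ℝ)))
    (Q : ℝ) : ∃ B : ℝ, ∀ f : G → ℝ, (∀ x, 0 ≤ f x) →
      (∀ F : Finset G, ∑ x ∈ F, f x ^ (2 * N / (N + α) : ℝ) ≤ Q) →
      ∀ F F' : Finset G, ∑ x ∈ F, ∑ y ∈ F', R x y * f y * f x ≤ B := by
  classical
  obtain ⟨K, hK0, hK⟩ := hfar
  obtain ⟨K', hK0', hK'⟩ := hnear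
  have hN : (0 : ℝ) < N := hα.trans hαN
  set q : ℝ := 2 * N / (N + α) with hq
  have hq0 : 0 < q := by positivity
  have hq2 : 0 ≤ 2 - q := by
    rw [sub_nonneg, hq, div_le_iff₀ (by positivity)]; linarith
  set L : ℝ := Q + K + K' + Q ^ ((2 - q) / q) with hL
  refine ⟨c₂ * (L * Q + L * Q), fun f hf hQ F F' => ?_⟩
  have hQ0 : 0 ≤ Q := by simpa using hQ ∅
  have hL0 : 0 ≤ L := by positivity
  set ρ : G → ℝ := fun x => f x ^ (-(q / N)) with hρ
  set g1 : G → G → ℝ := fun x y => if 0 < f x ∧ 1 ≤ δ x y ∧ ρ x < δ x y then δ x y ^ (-(2 * N : ℝ)) else 0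
    with hg1
  set g2 : G → G → ℝ := fun x y => if 0 < f x ∧ 1 ≤ δ x y ∧ δ x y ≤ ρ x then
    f x ^ 2 * δ x y ^ (α - N) else 0 with hg2
  set g3 : G → G → ℝ := fun x y => if x = y then f x ^ 2 else 0 with hg3
  set g : G → G → ℝ := fun x y => f x ^ q * f y ^ q + g1 x y + g2 x y + g3 x y with hg
  have hfq : ∀ x, 0 ≤ f x ^ q := fun x => Real.rpow_nonneg (hf x) _
  have g1n : ∀ x y, 0 ≤ g1 x y := by
    intro x y; simp only [hg1]; split_ifs with h
    · exact Real.rpow_nonneg (by linarith) _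
    · exact le_rfl
  have g2n : ∀ x y, 0 ≤ g2 x y := by
    intro x y; simp only [hg2]; split_ifs with h
    · exact mul_nonneg (sq_nonneg _) (Real.rpow_nonneg (by linarith) _)
    · exact le_rfl
  have g3n : ∀ x y, 0 ≤ g3 x y := by
    intro x y; simp only [hg3]; split_ifs
    · exact sq_nonneg _
    · exact le_rfl
  have gn : ∀ x y, 0 ≤ g x y := by
    intro x y
    have := g1n x y; have := g2n x y; have := g3n x y
    have := mul_nonneg (hfq x) (hfq y)
    simp only [hg]; linarith
  have hpt1 : ∀ x y, f y ≤ f x → R x y * f y * f x ≤ c₂ * g x y := by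
    intro x y hxy
    have hff : 0 ≤ f y * f x := mul_nonneg (hf y) (hf x)
    rw [mul_assoc]
    by_cases hxe : x = y
    · subst hxe
      refine mul_le_mul (hR_diag x) ?_ hff hc₂.le
      have := g1n x x; have := g2n x x
      have := mul_nonneg (hfq x) (hfq x)
      simp only [hg, hg3, if_true] at *
      nlinarith
    refine (mul_le_mul_of_nonneg_right (hR_up x y hxe) hff).trans ?_
    rw [mul_assoc]
    refine mul_le_mul_of_nonneg_left ?_ hc₂.le
    rcases (hf x).eq_or_lt with h0 | hpos
    · rw [← h0]; simpa using gn x y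
    rcases hδ x y with h0 | h1
    · rw [h0, Real.zero_rpow (by linarith), zero_mul]; exact gn x y
    have b1 := g1n x y; have b2 := g2n x y; have b3 := g3n x y
    have b0 := mul_nonneg (hfq x) (hfq y)
    have hdn : 0 ≤ δ x y ^ (α - N) := Real.rpow_nonneg (by linarith) _
    by_cases hd : δ x y ≤ ρ x
    · have e : g2 x y = f x ^ 2 * δ x y ^ (α - N) := by simp only [hg2]; rw [if_pos ⟨hpos, h1, hd⟩]
      have : δ x y ^ (α - N) * (f y * f x) ≤ g2 x y := by
        rw [e, mul_comm, sq]
        gcongr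
      simp only [hg]; linarith
    · have e : g1 x y = δ x y ^ (-(2 * N : ℝ)) := by
        simp only [hg1]; rw [if_pos ⟨hpos, h1, not_le.1 hd⟩]
      have := young_kernel N α hα hαN (f y * f x) (δ x y) hff (by linarith)
      rw [← hq, Real.mul_rpow (hf y) (hf x), ← e] at this
      simp only [hg]; linarith
  have hpt : ∀ x y, R x y * f y * f x ≤ c₂ * (g x y + g y x) := by
    intro x y
    rcases le_total (f y) (f x) with h | h
    · have := hpt1 x y h
      have := mul_nonneg hc₂.le (gn y x)
      linarith
    · have h2 := hpt1 y x h
      rw [hR_symm, show R y x * f y * f x = R y x * f x * f y by ring]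
      have := mul_nonneg hc₂.le (gn x y)
      linarith
  have hrow : ∀ x, ∀ F : Finset G, ∑ y ∈ F, g x y ≤ L * f x ^ q := by
    intro x F
    simp only [hg, Finset.sum_add_distrib, ← Finset.mul_sum]
    have r0 : f x ^ q * ∑ y ∈ F, f y ^ q ≤ Q * f x ^ q := by
      rw [mul_comm]; exact mul_le_mul_of_nonneg_right (hQ F) (hfq x)
    have r3 : ∑ y ∈ F, g3 x y ≤ Q ^ ((2 - q) / q) * f x ^ q := by
      have hs : f x ^ 2 ≤ Q ^ ((2 - q) / q) * f x ^ q := by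
        rcases (hf x).eq_or_lt with h0 | hpos
        · rw [← h0, Real.zero_rpow hq0.ne']; simp
        · have h1 : f x ^ q ≤ Q := by simpa using hQ {x}
          calc f x ^ 2 = (f x ^ q) ^ ((2 - q) / q) * f x ^ q := by
                rw [← Real.rpow_mul (hf x), mul_div_cancel₀ _ hq0.ne', ← Real.rpow_add hpos,
                  ← Real.rpow_natCast]; norm_num
            _ ≤ _ := mul_le_mul_of_nonneg_right
                (Real.rpow_le_rpow (hfq x) h1 (by positivity)) (hfq x)
      simp only [hg3]
      rw [Finset.sum_ite_eq]
      split_ifs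
      · exact hs
      · exact (sq_nonneg _).trans hs
    have r12 : ∑ y ∈ F, g1 x y ≤ K * f x ^ q ∧ ∑ y ∈ F, g2 x y ≤ K' * f x ^ q := by
      rcases (hf x).eq_or_lt with h0 | hpos
      · simp only [hg1, hg2, ← h0, lt_irrefl, false_and, if_false, Finset.sum_const_zero]
        have := Real.rpow_nonneg (le_refl (0 : ℝ)) q
        exact ⟨by positivity, by positivity⟩
      · have hρ0 : 0 < ρ x := Real.rpow_pos_of_pos hpos _
        constructor
        · simp only [hg1]
          rw [← Finset.sum_filter]
          have := hK x (F.filter fun y => 0 < f x ∧ 1 ≤ δ x y ∧ ρ x < δ x y) (ρ x) hρ0 (fun y hy =>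
            (Finset.mem_filter.1 hy).2.2)
          refine this.trans (le_of_eq ?_)
          simp only [hρ]
          rw [← Real.rpow_mul (hf x)]; congr 2; field_simp
        · simp only [hg2]
          rw [← Finset.sum_filter, ← Finset.mul_sum]
          have := hK' x (F.filter fun y => 0 < f x ∧ 1 ≤ δ x y ∧ δ x y ≤ ρ x) (ρ x) hρ0 (fun y hy =>
            (Finset.mem_filter.1 hy).2.2)
          refine (mul_le_mul_of_nonneg_left this (sq_nonneg _)).trans (le_of_eq ?_)
          simp only [hρ]
          rw [← Real.rpow_mul (hf x), mul_left_comm, ← Real.rpow_natCast, ← Real.rpow_add hpos]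
          congr 2; rw [hq]; push_cast; field_simp; ring
    have := r12.1; have := r12.2
    rw [hL]; linarith
  have htot : ∀ F F' : Finset G, ∑ x ∈ F, ∑ y ∈ F', g x y ≤ L * Q := by
    intro F F'
    refine (Finset.sum_le_sum fun x _ => hrow x F').trans ?_
    rw [← Finset.mul_sum]
    exact mul_le_mul_of_nonneg_left (hQ F) hL0
  calc _ ≤ ∑ x ∈ F, ∑ y ∈ F', c₂ * (g x y + g y x) :=
        Finset.sum_le_sum fun x _ => Finset.sum_le_sum fun y _ => hpt x y
    _ = c₂ * (∑ x ∈ F, ∑ y ∈ F', g x y + ∑ y ∈ F', ∑ x ∈ F, g y x) := by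
        rw [Finset.sum_comm (s := F') (t := F)]
        simp only [← Finset.mul_sum, Finset.sum_add_distrib]
    _ ≤ _ := mul_le_mul_of_nonneg_left (add_le_add (htot F F') (htot F' F)) hc₂.le

/-- weak-star convergence from boundedness and pointwise convergence -/
lemma tendsto_c0 (g : ℕ → G → ℝ) (g0 : G → ℝ) (B : ℝ) (hg : ∀ n x, 0 ≤ g n x)
    (hB : ∀ n, ∀ F : Finset G, ∑ x ∈ F, g n x ≤ B)
    (hlim : ∀ x, Tendsto (fun n => g n x) atTop (𝓝 (g0 x)))
    (h : G → ℝ) (hh : Tendsto h cofinite (𝓝 0)) :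
    Tendsto (fun n => ∑' x, h x * g n x) atTop (𝓝 (∑' x, h x * g0 x)) := by
  classical
  have hg0 : ∀ x, 0 ≤ g0 x := fun x => ge_of_tendsto' (hlim x) fun n => hg n x
  have hB0 : ∀ F : Finset G, ∑ x ∈ F, g0 x ≤ B := fun F =>
    le_of_tendsto' (tendsto_finsetSum F fun x _ => hlim x) fun n => hB n F
  have hBn : 0 ≤ B := by simpa using hB0 ∅
  -- tail estimate
  have tail : ∀ (k : G → ℝ), (∀ x, 0 ≤ k x) → (∀ F : Finset G, ∑ x ∈ F, k x ≤ B) →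
      ∀ ε > 0, ∀ F : Finset G, (∀ x, x ∉ F → |h x| ≤ ε) →
      |∑' x, h x * k x - ∑ x ∈ F, h x * k x| ≤ ε * B := by
    intro k hk hkB ε hε F hF
    have hks : Summable k := summable_of_sum_le hk hkB
    set h' : G → ℝ := fun x => if x ∈ F then 0 else h x with hh'
    have hb : ∀ x, ‖h' x * k x‖ ≤ ε * k x := by
      intro x
      rw [norm_mul, Real.norm_eq_abs, Real.norm_eq_abs, abs_of_nonneg (hk x)]
      refine mul_le_mul_of_nonneg_right ?_ (hk x)
      simp only [hh']
      split_ifs with hx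
      · simpa using hε.le
      · exact hF x hx
    have hs' : Summable fun x => h' x * k x := Summable.of_norm_bounded (hks.mul_left ε) hb
    have hsF : HasSum (fun x => if x ∈ F then h x * k x else 0) (∑ x ∈ F, h x * k x) := by
      have : HasSum (fun x => if x ∈ F then h x * k x else 0)
          (∑ x ∈ F, if x ∈ F then h x * k x else 0) :=
        hasSum_sum_of_ne_finset_zero (fun x hx => by simp [hx])
      rwa [Finset.sum_congr rfl (fun x hx => if_pos hx)] at this
    have hadd : HasSum (fun x => h x * k x) (∑' x, h' x * k x + ∑ x ∈ F, h x * k x) := by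
      have := hs'.hasSum.add hsF
      refine (funext fun x => ?_ : (fun x => h' x * k x + if x ∈ F then h x * k x else 0)
        = fun x => h x * k x) ▸ this
      simp only [hh']
      split_ifs <;> simp
    rw [hadd.tsum_eq, add_sub_cancel_right, ← Real.norm_eq_abs]
    refine (tsum_of_norm_bounded (hks.mul_left ε).hasSum hb).trans ?_
    rw [tsum_mul_left]
    exact mul_le_mul_of_nonneg_left (Real.tsum_le_of_sum_le hk hkB) hε.le
  rw [Metric.tendsto_atTop]
  intro ε hε
  set η : ℝ := ε / (4 * (B + 1)) with hη
  have hη0 : 0 < η := by positivity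
  have hηB : η * B ≤ ε / 4 := by
    rw [hη, div_mul_eq_mul_div, div_le_div_iff₀ (by positivity) (by positivity)]; nlinarith
  have hfin : {x | ¬ |h x| < η}.Finite := by
    have := hh.eventually (Metric.ball_mem_nhds (0 : ℝ) hη0)
    rw [Filter.eventually_cofinite] at this
    simpa using this
  set F := hfin.toFinset with hF
  have hFt : ∀ x, x ∉ F → |h x| ≤ η := by
    intro x hx; simp [hF] at hx; exact hx.le
  have hconv : Tendsto (fun n => ∑ x ∈ F, h x * g n x) atTop (𝓝 (∑ x ∈ F, h x * g0 x)) :=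
    tendsto_finsetSum F fun x _ => (hlim x).const_mul _
  obtain ⟨n0, hn0⟩ := Metric.tendsto_atTop.1 hconv (ε / 4) (by positivity)
  refine ⟨n0, fun n hn => ?_⟩
  have t1 := (tail (g n) (hg n) (hB n) η hη0 F hFt).trans hηB
  have t2 := (tail g0 hg0 hB0 η hη0 F hFt).trans hηB
  have t3 := hn0 n hn
  rw [Real.dist_eq] at t3 ⊢
  rw [abs_lt] at t3 ⊢
  rw [abs_le] at t1 t2
  constructor <;> linarith [t1.1, t1.2, t2.1, t2.2, t3.1, t3.2]

theorem concentration_compactness_convergence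
    [Group G] [Countable G]
    (S : Finset G) (hS_gen : Subgroup.closure (S : Set G) = ⊤)
    (hS_sym : ∀ s ∈ S, s⁻¹ ∈ S) (hS_e : (1 : G) ∉ S)
    (N : ℕ) (hN : 3 ≤ N)
    (C₁ C₂ : ℝ) (hC₁ : 0 < C₁) (hC₂ : 0 < C₂)
    (hgrowth : ∀ n : ℕ, 1 ≤ n →
      C₁ * (n : ℝ) ^ N ≤ (Nat.card {x : G // wordDist S 1 x ≤ n} : ℝ) ∧
      (Nat.card {x : G // wordDist S 1 x ≤ n} : ℝ) ≤ C₂ * (n : ℝ) ^ N)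
    (α : ℝ) (hα : 0 < α) (hαN : α < N)
    (Rα : G → G → ℝ) (hR_nonneg : ∀ x y, 0 ≤ Rα x y)
    (hR_symm : ∀ x y, Rα x y = Rα y x)
    (c₁ c₂ : ℝ) (hc₁ : 0 < c₁) (hc₂ : 0 < c₂)
    (hR_low : ∀ x y : G, x ≠ y → c₁ * (wordDist S x y : ℝ) ^ (α - (N : ℝ)) ≤ Rα x y)
    (hR_up : ∀ x y : G, x ≠ y → Rα x y ≤ c₂ * (wordDist S x y : ℝ) ^ (α - (N : ℝ)))
    (hR_diag : ∀ x : G, Rα x x ≤ c₂)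
    (p : ℝ) (hp : ((N : ℝ) + α) / ((N : ℝ) - 2) ≤ p)
    (u : ℕ → G → ℝ)
    (hbdd : ∃ M : ℝ, ∀ n, MemD12 S N (u n) ∧ D12Norm S (u n) ≤ M) :
    ∃ φ : ℕ → ℕ, StrictMono φ ∧ ∃ v : G → ℝ, MemD12 S N v ∧
      (∀ x : G, Tendsto (fun n => u (φ n) x) atTop (𝓝 (v x))) ∧
      (∀ h : G → ℝ, Tendsto h cofinite (𝓝 0) →
        Tendsto (fun n => ∑' x, h x * gradSq S (u (φ n)) x) atTop
          (𝓝 (∑' x, h x * gradSq S v x))) ∧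
      (∀ h : G → ℝ, Tendsto h cofinite (𝓝 0) →
        Tendsto (fun n => ∑' x, h x * gradSq S (fun z => u (φ n) z - v z) x) atTop (𝓝 0)) ∧
      (∀ h : G → ℝ, Tendsto h cofinite (𝓝 0) →
        Tendsto (fun n => ∑' x, h x *
            (conv Rα (fun y => |u (φ n) y - v y| ^ p) x * |u (φ n) x - v x| ^ p))
          atTop (𝓝 0)) := by
  classical
  obtain ⟨M, hM⟩ := hbdd
  have hN3 : (3 : ℝ) ≤ N := by exact_mod_cast hN
  set r : ℝ := 2 * (N : ℝ) / ((N : ℝ) - 2) with hr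
  have hr0 : 0 < r := by rw [hr]; apply div_pos <;> linarith
  set q : ℝ := 2 * N / (N + α) with hq
  have hq0 : 0 < q := by positivity
  have hp0 : 0 < p := lt_of_lt_of_le (div_pos (by linarith) (by linarith)) hp
  have hpq : r ≤ p * q := by
    have h2 : (N : ℝ) - 2 ≠ 0 := by linarith
    calc r = ((N : ℝ) + α) / ((N : ℝ) - 2) * q := by
          rw [hr, hq]; field_simp
      _ ≤ _ := mul_le_mul_of_nonneg_right hp hq0.le
  -- gradient bound
  have hE : ∀ n, ∑' x, gradSq S (u n) x ≤ M ^ 2 := by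
    intro n
    have h0 : 0 ≤ ∑' x, gradSq S (u n) x := tsum_nonneg fun x => gradSq_nonneg S _ x
    have h := (hM n).2
    unfold D12Norm at h
    rw [← Real.sqrt_eq_rpow] at h
    calc _ = (√(∑' x, gradSq S (u n) x)) ^ 2 := (Real.sq_sqrt h0).symm
      _ ≤ _ := pow_le_pow_left₀ (Real.sqrt_nonneg _) h 2
  have hEF : ∀ n, ∀ F : Finset G, ∑ x ∈ F, gradSq S (u n) x ≤ M ^ 2 := fun n F =>
    ((hM n).1.2.sum_le_tsum F fun x _ => gradSq_nonneg S _ x).trans (hE n)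
  obtain ⟨B, hB⟩ := sobolev S hS_gen hS_sym N hN C₁ C₂ hC₁ hgrowth (M ^ 2)
  have hBF : ∀ n, ∀ F : Finset G, ∑ x ∈ F, |u n x| ^ r ≤ B := fun n F =>
    (((hM n).1.1 : Summable fun x => |u n x| ^ r).sum_le_tsum F fun x _ => by positivity).trans
      (hB (u n) (hM n).1 (hE n))
  have hB0 : 0 ≤ B := by simpa using hBF 0 ∅
  have root : ∀ (b c : ℝ), |b| ^ r ≤ c → |b| ≤ c ^ (1 / r) := by
    intro b c h
    calc |b| = (|b| ^ r) ^ (1 / r) := by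
          rw [← Real.rpow_mul (abs_nonneg _), mul_one_div_cancel hr0.ne', Real.rpow_one]
      _ ≤ _ := Real.rpow_le_rpow (by positivity) h (by positivity)
  -- extraction
  have hcomp : IsCompact (Set.pi Set.univ fun _ : G => Set.Icc (-(B ^ (1 / r))) (B ^ (1 / r))) :=
    isCompact_univ_pi fun _ => isCompact_Icc
  obtain ⟨v, -, φ, hφ, hv⟩ := hcomp.tendsto_subseq (x := u) (fun n x _ => by
    have h1 : |u n x| ^ r ≤ B := by simpa using hBF n {x}
    exact abs_le.1 (root _ _ h1))
  have hvx : ∀ x, Tendsto (fun n => u (φ n) x) atTop (𝓝 (v x)) := fun x =>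
    (tendsto_pi_nhds.1 hv) x
  have hgradlim : ∀ x, Tendsto (fun n => gradSq S (u (φ n)) x) atTop (𝓝 (gradSq S v x)) := fun x =>
    tendsto_finsetSum S fun s _ => ((hvx (x * s)).sub (hvx x)).pow 2
  have hvE : ∀ F : Finset G, ∑ x ∈ F, gradSq S v x ≤ M ^ 2 := fun F =>
    le_of_tendsto' (tendsto_finsetSum F fun x _ => hgradlim x) fun n => hEF _ F
  have hvB : ∀ F : Finset G, ∑ x ∈ F, |v x| ^ r ≤ B := fun F =>
    le_of_tendsto' (tendsto_finsetSum F fun x _ =>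
      ((hvx x).abs.rpow_const (Or.inr hr0.le))) fun n => hBF _ F
  have hvD : MemD12 S N v :=
    ⟨summable_of_sum_le (fun x => by positivity) hvB,
      summable_of_sum_le (fun x => gradSq_nonneg S v x) hvE⟩
  refine ⟨φ, hφ, v, hvD, hvx, ?_, ?_, ?_⟩
  · intro h hh
    exact tendsto_c0 (fun n => gradSq S (u (φ n))) (gradSq S v) (M ^ 2)
      (fun n x => gradSq_nonneg S _ x) (fun n F => hEF _ F) hgradlim h hh
  · intro h hh
    have := tendsto_c0 (fun n => gradSq S (fun z => u (φ n) z - v z)) (fun _ => 0)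
      (2 * (M ^ 2 + M ^ 2)) (fun n x => gradSq_nonneg S _ x) (fun n F => ?_) (fun x => ?_) h hh
    · simpa using this
    · calc _ ≤ ∑ x ∈ F, 2 * (gradSq S (u (φ n)) x + gradSq S v x) := by
            refine Finset.sum_le_sum fun x _ => ?_
            unfold gradSq
            rw [← Finset.sum_add_distrib, Finset.mul_sum]
            refine Finset.sum_le_sum fun s _ => ?_
            nlinarith [sq_nonneg ((u (φ n) (x * s) - u (φ n) x) + (v (x * s) - v x))]
        _ = 2 * (∑ x ∈ F, gradSq S (u (φ n)) x + ∑ x ∈ F, gradSq S v x) := by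
            rw [← Finset.mul_sum, Finset.sum_add_distrib]
        _ ≤ _ := by
            have := hEF (φ n) F; have := hvE F
            linarith
    · have h1 : Tendsto (fun n => gradSq S (fun z => u (φ n) z - v z) x) atTop
          (𝓝 (∑ s ∈ S, ((v (x * s) - v (x * s)) - (v x - v x)) ^ 2)) :=
        tendsto_finsetSum S fun s _ =>
          (((hvx (x * s)).sub tendsto_const_nhds).sub ((hvx x).sub tendsto_const_nhds)).pow 2
      simpa using h1
  · intro h hh
    -- bounds on the difference
    have hwr : ∀ n, ∀ F : Finset G, ∑ x ∈ F, |u (φ n) x - v x| ^ r ≤ 2 ^ r * (B + B) := by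
      intro n F
      calc _ ≤ ∑ x ∈ F, 2 ^ r * (|u (φ n) x| ^ r + |v x| ^ r) := by
            refine Finset.sum_le_sum fun x _ => ?_
            have hab : |u (φ n) x - v x| ≤ 2 * max |u (φ n) x| |v x| := by
              have := abs_sub (u (φ n) x) (v x)
              have := le_max_left |u (φ n) x| |v x|
              have := le_max_right |u (φ n) x| |v x|
              linarith
            refine (Real.rpow_le_rpow (abs_nonneg _) hab hr0.le).trans ?_
            rw [Real.mul_rpow (by norm_num) (by positivity)]
            refine mul_le_mul_of_nonneg_left ?_ (by positivity)
            have h1 : 0 ≤ |u (φ n) x| ^ r := by positivity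
            have h2 : 0 ≤ |v x| ^ r := by positivity
            rcases max_choice |u (φ n) x| |v x| with hm | hm <;> rw [hm] <;> linarith
        _ = 2 ^ r * (∑ x ∈ F, |u (φ n) x| ^ r + ∑ x ∈ F, |v x| ^ r) := by
            rw [← Finset.mul_sum, Finset.sum_add_distrib]
        _ ≤ _ := by
            refine mul_le_mul_of_nonneg_left (add_le_add (hBF _ F) (hvB F)) (by positivity)
    set B' : ℝ := 2 ^ r * (B + B) with hB'
    set Q : ℝ := (B' ^ (1 / r)) ^ (p * q - r) * B' with hQ
    have hB'0 : 0 ≤ B' := by positivity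
    set f : ℕ → G → ℝ := fun n y => |u (φ n) y - v y| ^ p with hf
    have hf0 : ∀ n y, 0 ≤ f n y := fun n y => by positivity
    have hfQ : ∀ n, ∀ F : Finset G, ∑ x ∈ F, f n x ^ q ≤ Q := by
      intro n F
      calc _ ≤ ∑ x ∈ F, (B' ^ (1 / r)) ^ (p * q - r) * |u (φ n) x - v x| ^ r := by
            refine Finset.sum_le_sum fun x _ => ?_
            simp only [hf]
            rw [← Real.rpow_mul (abs_nonneg _)]
            have h1 : |u (φ n) x - v x| ^ r ≤ B' := by simpa using hwr n {x}
            have h2 := root _ _ h1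
            rcases (abs_nonneg (u (φ n) x - v x)).eq_or_lt with h0 | hpos
            · rw [← h0, Real.zero_rpow (by positivity), Real.zero_rpow hr0.ne', mul_zero]
            · calc |u (φ n) x - v x| ^ (p * q)
                  = |u (φ n) x - v x| ^ (p * q - r) * |u (φ n) x - v x| ^ r := by
                    rw [← Real.rpow_add hpos]; congr 1; ring
                _ ≤ _ := mul_le_mul_of_nonneg_right
                    (Real.rpow_le_rpow (abs_nonneg _) h2 (by linarith)) (by positivity)
        _ = (B' ^ (1 / r)) ^ (p * q - r) * ∑ x ∈ F, |u (φ n) x - v x| ^ r := by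
            rw [← Finset.mul_sum]
        _ ≤ _ := mul_le_mul_of_nonneg_left (hwr n F) (by positivity)
    -- kernel estimates
    set δ : G → G → ℝ := fun x y => (wordDist S x y : ℝ) with hδ
    have hδ1 : ∀ x y, δ x y = 0 ∨ 1 ≤ δ x y := by
      intro x y
      rcases Nat.eq_zero_or_pos (wordDist S x y) with h | h
      · left; simp [hδ, h]
      · right; simp only [hδ]; exact_mod_cast h
    have hcard : ∀ (x : G) (F : Finset G) (ρ : ℝ), 0 < ρ → (∀ y ∈ F, 1 ≤ δ x y ∧ δ x y ≤ ρ) →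
        (F.card : ℝ) ≤ C₂ * ρ ^ N := fun x F ρ hρ hF =>
      annulus_card S N C₁ C₂ hC₁ hC₂ hgrowth x F ρ hρ hF
    have hnear := near_sum δ N C₂ hC₂ hcard α hα hαN
    have hfar := far_sum δ N hN C₂ hC₂ hcard
    obtain ⟨B₁, hB₁⟩ := conv_bound δ Rα N α hα hαN c₂ hc₂ hδ1 hR_up hR_diag hfar Q
    obtain ⟨B₂, hB₂⟩ := hls_bound δ Rα N α hα hαN c₂ hc₂ hδ1 hR_symm hR_up hR_diag hnear hfar Q
    have hRf : ∀ n x y, 0 ≤ Rα x y * f n y := fun n x y => mul_nonneg (hR_nonneg x y) (hf0 n y)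
    have hcs : ∀ n x, Summable fun y => Rα x y * f n y := fun n x =>
      summable_of_sum_le (hRf n x) (hB₁ (f n) (hf0 n) (hfQ n) x)
    have hc0 : ∀ n x, 0 ≤ conv Rα (f n) x := fun n x => tsum_nonneg (hRf n x)
    have hc1 : ∀ n x, conv Rα (f n) x ≤ B₁ := fun n x =>
      Real.tsum_le_of_sum_le (hRf n x) (hB₁ (f n) (hf0 n) (hfQ n) x)
    have := tendsto_c0 (fun n x => conv Rα (f n) x * f n x) (fun _ => 0) B₂
      (fun n x => mul_nonneg (hc0 n x) (hf0 n x)) (fun n F => ?_) (fun x => ?_) h hh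
    · simpa using this
    · have e : ∑ x ∈ F, conv Rα (f n) x * f n x = ∑' y, ∑ x ∈ F, Rα x y * f n y * f n x := by
        rw [Summable.tsum_finsetSum fun x _ => (hcs n x).mul_right _]
        refine Finset.sum_congr rfl fun x _ => ?_
        rw [tsum_mul_right]; rfl
      rw [e]
      refine Real.tsum_le_of_sum_le
        (fun y => Finset.sum_nonneg fun x _ => mul_nonneg (hRf n x y) (hf0 n x)) fun F' => ?_
      rw [Finset.sum_comm]
      exact hB₂ (f n) (hf0 n) (hfQ n) F F'
    · have hfx : Tendsto (fun n => f n x) atTop (𝓝 0) := by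
        have h1 : Tendsto (fun n => |u (φ n) x - v x| ^ p) atTop (𝓝 (|v x - v x| ^ p)) :=
          ((hvx x).sub tendsto_const_nhds).abs.rpow_const (Or.inr hp0.le)
        simpa [Real.zero_rpow hp0.ne'] using h1
      refine squeeze_zero (fun n => mul_nonneg (hc0 n x) (hf0 n x))
        (fun n => mul_le_mul_of_nonneg_right (hc1 n x) (hf0 n x)) ?_
      simpa using hfx.const_mul B₁

end Choquard
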